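/- For every mixed instance on a tree (a connected acyclic simple graph), an EFX^+_0 orientation always exists; consequently an EFX^+_- orientation always exists on trees (and hence on stars and paths). -/

import Mathlib

/-!
Root every component of the forest. Each edge then has a child endpoint, and distinct edges have
distinct children. Give an edge to its parent endpoint if it is a good for that agent, and to its
child endpoint otherwise. An agent `i` then holds exactly the edges that are goods for her, the only
possible exception being the edge whose child is `i`. Without this edge, every other bundle is
worth at most `v i ∅` to `i` and her own at least `v i ∅`; and it is the only item whose removal the
EFX⁺₀ conditions test.

The argument only needs an injective choice of one endpoint of each edge. In a finite graph such a
choice exists exactly when every component has at most one cycle.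
-/

open Finset

variable {V : Type*} [DecidableEq V]

/-- `e` has strictly positive marginal value (is a *good*) for the valuation `v`
relative to the item set `M`. -/
def IsGoodFor (v : Finset (Sym2 V) → ℝ) (M : Finset (Sym2 V)) (e : Sym2 V) : Prop :=
  ∀ S ⊆ M.erase e, v S < v (insert e S)

/-- `e` has strictly negative marginal value (is a *chore*) for the valuation `v`
relative to the item set `M`. -/
def IsChoreFor (v : Finset (Sym2 V) → ℝ) (M : Finset (Sym2 V)) (e : Sym2 V) : Prop :=
  ∀ S ⊆ M.erase e, v (insert e S) < v S

/-- `e` has zero marginal value (is a *dummy*) for the valuation `v`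
relative to the item set `M`. -/
def IsDummyFor (v : Finset (Sym2 V) → ℝ) (M : Finset (Sym2 V)) (e : Sym2 V) : Prop :=
  ∀ S ⊆ M.erase e, v (insert e S) = v S

/-- A valid instance on a simple graph: the edge set `M` consists of non-loop edges,
every edge is (for every agent) a good, a chore, or a dummy, and every edge not
incident to an agent is a dummy for that agent. -/
def ValidInstance (M : Finset (Sym2 V)) (v : V → Finset (Sym2 V) → ℝ) : Prop :=
  (∀ e ∈ M, ¬ e.IsDiag) ∧
  (∀ (i : V), ∀ e ∈ M, IsGoodFor (v i) M e ∨ IsChoreFor (v i) M e ∨ IsDummyFor (v i) M e) ∧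
  (∀ (i : V), ∀ e ∈ M, i ∉ e → IsDummyFor (v i) M e)

/-- `X` is a (complete) allocation of the items in `M`: bundles are contained in `M`
and every item belongs to exactly one bundle. -/
def IsAllocation (M : Finset (Sym2 V)) (X : V → Finset (Sym2 V)) : Prop :=
  (∀ i, X i ⊆ M) ∧ ∀ e ∈ M, ∃! i, e ∈ X i

/-- Every allocated edge goes to one of its endpoint agents. -/
def IsOrientation (X : V → Finset (Sym2 V)) : Prop :=
  ∀ i, ∀ e ∈ X i, i ∈ e

/-- Agent `i` envies agent `j`. -/
def Envies (v : V → Finset (Sym2 V) → ℝ) (X : V → Finset (Sym2 V)) (i j : V) : Prop :=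
  v i (X i) < v i (X j)

/-- EFX condition on the envied bundle, removing an item whose removal *strictly*
decreases the value (superscript `+`). -/
def CondEnviedStrict (v : V → Finset (Sym2 V) → ℝ) (X : V → Finset (Sym2 V)) : Prop :=
  ∀ i j, Envies v X i j → ∀ e ∈ X j,
    v i ((X j).erase e) < v i (X j) → v i ((X j).erase e) ≤ v i (X i)

/-- EFX condition on the envied bundle, removing an item whose removal weakly
decreases the value (superscript `0`). -/
def CondEnviedWeak (v : V → Finset (Sym2 V) → ℝ) (X : V → Finset (Sym2 V)) : Prop :=
  ∀ i j, Envies v X i j → ∀ e ∈ X j,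
    v i ((X j).erase e) ≤ v i (X j) → v i ((X j).erase e) ≤ v i (X i)

/-- EFX condition on the envious agent's own bundle, removing an item whose removal
*strictly* increases the value (subscript `-`). -/
def CondOwnStrict (v : V → Finset (Sym2 V) → ℝ) (X : V → Finset (Sym2 V)) : Prop :=
  ∀ i j, Envies v X i j → ∀ e ∈ X i,
    v i (X i) < v i ((X i).erase e) → v i (X j) ≤ v i ((X i).erase e)

/-- EFX condition on the envious agent's own bundle, removing an item whose removal
weakly increases the value (subscript `0`). -/
def CondOwnWeak (v : V → Finset (Sym2 V) → ℝ) (X : V → Finset (Sym2 V)) : Prop :=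
  ∀ i j, Envies v X i j → ∀ e ∈ X i,
    v i (X i) ≤ v i ((X i).erase e) → v i (X j) ≤ v i ((X i).erase e)

section Valuation

variable {w : Finset (Sym2 V) → ℝ} {M S : Finset (Sym2 V)} {e : Sym2 V}

theorem IsDummyFor.not_isGoodFor (h : IsDummyFor w M e) : ¬ IsGoodFor w M e :=
  fun hgood ↦ (hgood ∅ (empty_subset _)).ne' (h ∅ (empty_subset _))

theorem isGoodFor_iff_erase_lt (htri : IsGoodFor w M e ∨ IsChoreFor w M e ∨ IsDummyFor w M e)
    (hS : S ⊆ M) (he : e ∈ S) : IsGoodFor w M e ↔ w (S.erase e) < w S := by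
  have hsub : S.erase e ⊆ M.erase e := erase_subset_erase e hS
  constructor
  · intro hgood
    simpa only [insert_erase he] using hgood _ hsub
  · intro hlt
    rcases htri with hgood | hchore | hdummy
    · exact hgood
    · exact absurd hlt (insert_erase he ▸ hchore _ hsub).not_gt
    · exact absurd hlt (insert_erase he ▸ hdummy _ hsub).not_gt

theorem apply_empty_le_of_forall_isGoodFor (hS : S ⊆ M) (hgood : ∀ e ∈ S, IsGoodFor w M e) :
    w ∅ ≤ w S := by
  induction S using Finset.induction_on with
  | empty => exact le_rfl
  | insert a S ha ih =>
    obtain ⟨hgood_a, hgood_S⟩ := (forall_mem_insert _ _ _).1 hgood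
    have hSM : S ⊆ M.erase a := subset_erase.2 ⟨(subset_insert a S).trans hS, ha⟩
    exact (ih ((subset_insert a S).trans hS) hgood_S).trans (hgood_a S hSM).le

theorem apply_le_empty_of_forall_not_isGoodFor
    (htri : ∀ e ∈ M, IsGoodFor w M e ∨ IsChoreFor w M e ∨ IsDummyFor w M e)
    (hS : S ⊆ M) (hbad : ∀ e ∈ S, ¬ IsGoodFor w M e) : w S ≤ w ∅ := by
  induction S using Finset.induction_on with
  | empty => exact le_rfl
  | insert a S ha ih =>
    obtain ⟨hbad_a, hbad_S⟩ := (forall_mem_insert _ _ _).1 hbad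
    have haS : a ∈ insert a S := mem_insert_self a S
    rw [isGoodFor_iff_erase_lt (htri a (hS haS)) hS haS, erase_insert ha, not_lt] at hbad_a
    exact hbad_a.trans (ih ((subset_insert a S).trans hS) hbad_S)

end Valuation

section Misplaced

variable {v : V → Finset (Sym2 V) → ℝ} {M S T : Finset (Sym2 V)} {X : V → Finset (Sym2 V)} {i j : V}

theorem ValidInstance.mem_of_isGoodFor (hv : ValidInstance M v) {e : Sym2 V} (he : e ∈ M)
    (hgood : IsGoodFor (v i) M e) : i ∈ e :=
  by_contra fun hie ↦ (hv.2.2 i e he hie).not_isGoodFor hgood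

omit [DecidableEq V] in
theorem IsAllocation.notMem_of_ne (hX : IsAllocation M X) (hij : i ≠ j) {e : Sym2 V}
    (he : e ∈ X j) : e ∉ X i :=
  fun hei ↦ hij ((hX.2 e (hX.1 j he)).unique hei he)

/-- The items misplaced from the viewpoint of agent `i`: those she holds although they are not goods
for her, and the goods for her that she does not hold. -/
def misplaced (v : V → Finset (Sym2 V) → ℝ) (M : Finset (Sym2 V)) (X : V → Finset (Sym2 V))
    (i : V) : Set (Sym2 V) :=
  {e | e ∈ M ∧ ¬ (e ∈ X i ↔ IsGoodFor (v i) M e)}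

theorem apply_le_apply_of_notMem_misplaced (hv : ValidInstance M v) (hX : IsAllocation M X)
    (hij : i ≠ j) (hS : S ⊆ X i) (hT : T ⊆ X j) (hS' : ∀ e ∈ S, e ∉ misplaced v M X i)
    (hT' : ∀ e ∈ T, e ∉ misplaced v M X i) : v i T ≤ v i S := by
  have hSM : S ⊆ M := hS.trans (hX.1 i)
  have hTM : T ⊆ M := hT.trans (hX.1 j)
  have hgood : ∀ e ∈ S, IsGoodFor (v i) M e := fun e he ↦
    by_contra fun hbad ↦ hS' e he ⟨hSM he, fun h ↦ hbad (h.1 (hS he))⟩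
  have hbad : ∀ e ∈ T, ¬ IsGoodFor (v i) M e := fun e he hgood ↦
    hT' e he ⟨hTM he, fun h ↦ hX.notMem_of_ne hij (hT he) (h.2 hgood)⟩
  exact (apply_le_empty_of_forall_not_isGoodFor (hv.2.1 i) hTM hbad).trans
    (apply_empty_le_of_forall_isGoodFor hSM hgood)

omit [DecidableEq V] in
theorem Envies.ne (h : Envies v X i j) : i ≠ j := by
  rintro rfl
  exact lt_irrefl _ h

theorem condEnviedStrict_of_subsingleton_misplaced (hv : ValidInstance M v)
    (hX : IsAllocation M X) (hmis : ∀ i, (misplaced v M X i).Subsingleton) :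
    CondEnviedStrict v X := by
  intro i j henvy e he hlt
  have hei : e ∉ X i := hX.notMem_of_ne henvy.ne he
  have heM : e ∈ M := hX.1 j he
  have hgood : IsGoodFor (v i) M e :=
    (isGoodFor_iff_erase_lt (hv.2.1 i e heM) (hX.1 j) he).2 hlt
  have hemis : e ∈ misplaced v M X i := ⟨heM, fun h ↦ hei (h.2 hgood)⟩
  refine apply_le_apply_of_notMem_misplaced hv hX henvy.ne Subset.rfl (erase_subset e _)
    (fun f hf hfmis ↦ hei ?_) (fun f hf hfmis ↦ notMem_erase e (X j) ?_)
  · exact hmis i hfmis hemis ▸ hf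
  · exact hmis i hfmis hemis ▸ hf

theorem condOwnWeak_of_subsingleton_misplaced (hv : ValidInstance M v)
    (hX : IsAllocation M X) (hmis : ∀ i, (misplaced v M X i).Subsingleton) :
    CondOwnWeak v X := by
  intro i j henvy e he hle
  have heM : e ∈ M := hX.1 i he
  have hbad : ¬ IsGoodFor (v i) M e := fun hgood ↦
    hle.not_gt ((isGoodFor_iff_erase_lt (hv.2.1 i e heM) (hX.1 i) he).1 hgood)
  have hemis : e ∈ misplaced v M X i := ⟨heM, fun h ↦ hbad (h.1 he)⟩
  refine apply_le_apply_of_notMem_misplaced hv hX henvy.ne (erase_subset e _) Subset.rfl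
    (fun f hf hfmis ↦ notMem_erase e (X i) ?_) (fun f hf hfmis ↦ ?_)
  · exact hmis i hfmis hemis ▸ hf
  · exact hX.notMem_of_ne henvy.ne hf (hmis i hfmis hemis ▸ he)

theorem CondOwnWeak.condOwnStrict (h : CondOwnWeak v X) : CondOwnStrict v X :=
  fun i j henvy e he hlt ↦ h i j henvy e he hlt.le

end Misplaced

section Owner

variable {v : V → Finset (Sym2 V) → ℝ} {M : Finset (Sym2 V)} {child : Sym2 V → V} {e : Sym2 V}
  {i : V}

/-- The allocation of `M` described by a function sending every item to the agent who gets it. -/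
def bundle (M : Finset (Sym2 V)) (o : Sym2 V → V) (i : V) : Finset (Sym2 V) :=
  {e ∈ M | o e = i}

theorem mem_bundle {o : Sym2 V → V} : e ∈ bundle M o i ↔ e ∈ M ∧ o e = i :=
  mem_filter

theorem isAllocation_bundle (M : Finset (Sym2 V)) (o : Sym2 V → V) : IsAllocation M (bundle M o) :=
  ⟨fun _ ↦ filter_subset _ _, fun e he ↦
    ⟨o e, mem_bundle.2 ⟨he, rfl⟩, fun _ hi ↦ (mem_bundle.1 hi).2.symm⟩⟩

theorem isOrientation_bundle {o : Sym2 V → V} (ho : ∀ e ∈ M, o e ∈ e) :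
    IsOrientation (bundle M o) := by
  intro i e he
  obtain ⟨heM, rfl⟩ := mem_bundle.1 he
  exact ho e heM

open Classical in
/-- The agent who gets the edge `e` once one endpoint `child e` is singled out: the opposite
endpoint if `e` is a good for it, and `child e` otherwise. The opposite endpoint is found as an
agent other than `child e` for whom `e` is a good, since a good is always incident to its agent. -/
noncomputable def owner (v : V → Finset (Sym2 V) → ℝ) (M : Finset (Sym2 V)) (child : Sym2 V → V)
    (e : Sym2 V) : V :=
  if h : ∃ i, i ≠ child e ∧ IsGoodFor (v i) M e then h.choose else child e

theorem owner_eq_iff_isGoodFor (hv : ValidInstance M v) (he : e ∈ M) (hmem : child e ∈ e)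
    (hi : i ≠ child e) : owner v M child e = i ↔ IsGoodFor (v i) M e := by
  rw [owner]
  split_ifs with h
  · obtain ⟨hne, hgood⟩ := h.choose_spec
    refine ⟨fun hchoose ↦ hchoose ▸ hgood, fun hgood_i ↦ (Sym2.congr_right (a := child e)).1 ?_⟩
    rw [← (Sym2.mem_and_mem_iff hne.symm).1 ⟨hmem, hv.mem_of_isGoodFor he hgood⟩]
    exact (Sym2.mem_and_mem_iff hi.symm).1 ⟨hmem, hv.mem_of_isGoodFor he hgood_i⟩
  · exact iff_of_false hi.symm fun hgood ↦ h ⟨i, hi, hgood⟩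

theorem owner_mem (hv : ValidInstance M v) (he : e ∈ M) (hmem : child e ∈ e) :
    owner v M child e ∈ e := by
  by_cases h : owner v M child e = child e
  · rwa [h]
  · exact hv.mem_of_isGoodFor he ((owner_eq_iff_isGoodFor hv he hmem h).1 rfl)

theorem subsingleton_misplaced_bundle_owner (hv : ValidInstance M v) (hinj : Set.InjOn child M)
    (hmem : ∀ e ∈ M, child e ∈ e) (i : V) :
    (misplaced v M (bundle M (owner v M child)) i).Subsingleton := by
  have hchild : ∀ e ∈ misplaced v M (bundle M (owner v M child)) i, child e = i := by
    rintro e ⟨he, hmis⟩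
    by_contra hne
    rw [mem_bundle, owner_eq_iff_isGoodFor hv he (hmem e he) (Ne.symm hne)] at hmis
    exact hmis (and_iff_right he)
  exact fun e he f hf ↦ hinj he.1 hf.1 ((hchild e he).trans (hchild f hf).symm)

end Owner

section Forest

variable {α : Type*} {G : SimpleGraph α}

theorem eq_penultimate_of_adj_of_dist_le (hG : G.IsAcyclic) {r i j : α} {p : G.Walk r i}
    (hp : p.IsPath) (hadj : G.Adj i j) (hle : G.dist r j ≤ G.dist r i) : j = p.penultimate := by
  have hdist : G.dist r i = G.dist r j + 1 := by
    have := hG.dist_eq_dist_add_one_of_adj_of_reachable r hadj p.reachable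
    lia
  obtain ⟨q, hq⟩ := (p.reachable.trans hadj.reachable).exists_walk_length_eq_dist
  have hq' : (q.concat hadj.symm).IsPath :=
    SimpleGraph.Walk.isPath_of_length_eq_dist _ (by rw [SimpleGraph.Walk.length_concat, hq, hdist])
  have hpq : p = q.concat hadj.symm :=
    congrArg Subtype.val ((hG.subsingleton_path r i).elim ⟨p, hp⟩ ⟨_, hq'⟩)
  rw [hpq, SimpleGraph.Walk.penultimate_concat]

theorem exists_injOn_edgeSet_of_isAcyclic (hG : G.IsAcyclic) :
    ∃ child : Sym2 α → α, Set.InjOn child G.edgeSet ∧ ∀ e, child e ∈ e := by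
  let root (i : α) : α := (G.connectedComponentMk i).out
  have hpath (i : α) : ∃ p : G.Walk (root i) i, p.IsPath :=
    (SimpleGraph.ConnectedComponent.exact (Quot.out_eq _)).exists_isPath
  have hfar (e : Sym2 α) : ∃ i ∈ e, ∀ j ∈ e, G.dist (root j) j ≤ G.dist (root i) i := by
    induction e with | _ a b
    rcases le_total (G.dist (root a) a) (G.dist (root b) b) with h | h
    · exact ⟨b, Sym2.mem_mk_right a b, by simp [h]⟩
    · exact ⟨a, Sym2.mem_mk_left a b, by simp [h]⟩
  choose path hpath using hpath
  choose child hmem hfar using hfar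
  -- An edge is recovered from its child `i` as the last edge of the path from the root to `i`.
  have hinv : Set.LeftInvOn (fun i ↦ s(i, (path i).penultimate)) child G.edgeSet := by
    intro e he
    obtain ⟨j, hj⟩ := hmem e
    have hadj : G.Adj (child e) j := by rwa [hj, SimpleGraph.mem_edgeSet] at he
    have hroot : root j = root (child e) :=
      congrArg Quot.out (SimpleGraph.ConnectedComponent.sound hadj.symm.reachable)
    have hle := hfar e j (hj ▸ Sym2.mem_mk_right _ j)
    rw [hroot] at hle
    exact (congrArg _ (eq_penultimate_of_adj_of_dist_le hG (hpath _) hadj hle).symm).trans hj.symm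
  exact ⟨child, hinv.injOn, hmem⟩

end Forest

theorem stmt6_general {M : Finset (Sym2 V)} {v : V → Finset (Sym2 V) → ℝ}
    (hvalid : ValidInstance M v) {child : Sym2 V → V} (hinj : Set.InjOn child M)
    (hmem : ∀ e ∈ M, child e ∈ e) :
    (∃ X : V → Finset (Sym2 V),
        IsAllocation M X ∧ IsOrientation X ∧ CondEnviedStrict v X ∧ CondOwnWeak v X) ∧
    (∃ X : V → Finset (Sym2 V),
        IsAllocation M X ∧ IsOrientation X ∧ CondEnviedStrict v X ∧ CondOwnStrict v X) := by
  let X := bundle M (owner v M child)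
  have hX : IsAllocation M X := isAllocation_bundle M _
  have horient : IsOrientation X := isOrientation_bundle fun e he ↦ owner_mem hvalid he (hmem e he)
  have hmis := subsingleton_misplaced_bundle_owner hvalid hinj hmem
  have henvied : CondEnviedStrict v X := condEnviedStrict_of_subsingleton_misplaced hvalid hX hmis
  have hown : CondOwnWeak v X := condOwnWeak_of_subsingleton_misplaced hvalid hX hmis
  exact ⟨⟨X, hX, horient, henvied, hown⟩, X, hX, horient, henvied, hown.condOwnStrict⟩

/-- For every mixed instance on a tree, an EFX⁺₀ orientation exists;
consequently an EFX⁺₋ orientation also exists. -/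
theorem stmt6 {V : Type*} [Fintype V] [DecidableEq V]
    (G : SimpleGraph V) [DecidableRel G.Adj]
    (htree : G.IsTree)
    (v : V → Finset (Sym2 V) → ℝ)
    (hvalid : ValidInstance G.edgeFinset v) :
    (∃ X : V → Finset (Sym2 V),
        IsAllocation G.edgeFinset X ∧ IsOrientation X ∧
          CondEnviedStrict v X ∧ CondOwnWeak v X) ∧
    (∃ X : V → Finset (Sym2 V),
        IsAllocation G.edgeFinset X ∧ IsOrientation X ∧
          CondEnviedStrict v X ∧ CondOwnStrict v X) := by
  obtain ⟨child, hinj, hmem⟩ := exists_injOn_edgeSet_of_isAcyclic htree.isAcyclic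
  exact stmt6_general hvalid (by rwa [G.coe_edgeFinset]) fun e _ ↦ hmem e
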